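/- Let u ∈ F₂ and let ψ be a chain of type (C1) containing at least ‖u‖+1 factors of σ. Then: (i) if ‖σψ(u)‖ = ‖ψ(u)‖, then ‖σ^{i+1}ψ(u)‖ = ‖σ^{i}ψ(u)‖ for every integer i ≥ 0; and (ii) if ‖σ^{j+1}ψ(u)‖ = ‖σ^{j}ψ(u)‖ for some integer j ≥ 0, then ‖σψ(u)‖ = ‖ψ(u)‖. -/

import Mathlib

noncomputable section

/-- The free group of rank two. -/
abbrev F : Type := FreeGroup (Fin 2)

/-- The generator `a`. -/
def ga : F := FreeGroup.of 0

/-- The generator `b`. -/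
def gb : F := FreeGroup.of 1

/-- Build an automorphism of `F` from images of the generators together with
an explicit inverse. -/
def mkAut (x y xi yi : F)
    (h1 : FreeGroup.lift ![xi, yi] x = ga)
    (h2 : FreeGroup.lift ![xi, yi] y = gb)
    (h3 : FreeGroup.lift ![x, y] xi = ga)
    (h4 : FreeGroup.lift ![x, y] yi = gb) : MulAut F :=
  MonoidHom.toMulEquiv (FreeGroup.lift ![x, y]) (FreeGroup.lift ![xi, yi])
    (by
      ext i
      fin_cases i
      · simpa [ga] using h1
      · simpa [gb] using h2)
    (by
      ext i
      fin_cases i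
      · simpa [ga] using h3
      · simpa [gb] using h4)

/-- `σ : a ↦ ab, b ↦ b`. -/
def σ : MulAut F :=
  mkAut (ga * gb) gb (ga * gb⁻¹) gb
    (by simp [ga, gb]) (by simp [ga, gb]) (by simp [ga, gb]) (by simp [ga, gb])

/-- `τ : a ↦ a, b ↦ ba`. -/
def τ : MulAut F :=
  mkAut ga (gb * ga) ga (gb * ga⁻¹)
    (by simp [ga, gb]) (by simp [ga, gb]) (by simp [ga, gb]) (by simp [ga, gb])

/-- `δ₁ : a ↦ b⁻¹ab, b ↦ b`. -/
def δ₁ : MulAut F :=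
  mkAut (gb⁻¹ * ga * gb) gb (gb * ga * gb⁻¹) gb
    (by simp [ga, gb, mul_assoc]) (by simp [ga, gb]) (by simp [ga, gb, mul_assoc]) (by simp [ga, gb])

/-- `δ₂ : a ↦ bab⁻¹, b ↦ b`. -/
def δ₂ : MulAut F :=
  mkAut (gb * ga * gb⁻¹) gb (gb⁻¹ * ga * gb) gb
    (by simp [ga, gb, mul_assoc]) (by simp [ga, gb]) (by simp [ga, gb, mul_assoc]) (by simp [ga, gb])

/-- `δ₃ : a ↦ a, b ↦ a⁻¹ba`. -/
def δ₃ : MulAut F :=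
  mkAut ga (ga⁻¹ * gb * ga) ga (ga * gb * ga⁻¹)
    (by simp [ga, gb]) (by simp [ga, gb, mul_assoc]) (by simp [ga, gb]) (by simp [ga, gb, mul_assoc])

/-- `δ₄ : a ↦ a, b ↦ aba⁻¹`. -/
def δ₄ : MulAut F :=
  mkAut ga (ga * gb * ga⁻¹) ga (ga⁻¹ * gb * ga)
    (by simp [ga, gb]) (by simp [ga, gb, mul_assoc]) (by simp [ga, gb]) (by simp [ga, gb, mul_assoc])

/-- `π : a ↦ b, b ↦ a⁻¹`. -/
def pi' : MulAut F :=
  mkAut gb ga⁻¹ gb⁻¹ ga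
    (by simp [ga, gb]) (by simp [ga, gb]) (by simp [ga, gb]) (by simp [ga, gb])

/-- Word length of (the reduced word representing) an element of `F`. -/
def len (w : F) : ℕ := w.toWord.length

/-- Cyclic length: minimal word length among all conjugates. -/
def cyclen (w : F) : ℕ := sInf {n | ∃ g : F, len (g * w * g⁻¹) = n}

/-- The chain `τ^{m_k}σ^{l_k}⋯τ^{m_1}σ^{l_1}` of type (C1) determined by the list
`[(l_k, m_k), …, (l_1, m_1)]` of pairs of exponents. -/
def chainC1 (c : List (ℕ × ℕ)) : MulAut F :=
  (c.map fun p => τ ^ p.2 * σ ^ p.1).prod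

/-- The chain `τ^{-m_k}σ^{-l_k}⋯τ^{-m_1}σ^{-l_1}` of type (C2) determined by the list
`[(l_k, m_k), …, (l_1, m_1)]` of pairs of exponents. -/
def chainC2 (c : List (ℕ × ℕ)) : MulAut F :=
  (c.map fun p => (τ ^ p.2)⁻¹ * (σ ^ p.1)⁻¹).prod

/-- Number of factors of `σ` in a chain. -/
def sigmaCount (c : List (ℕ × ℕ)) : ℕ := (c.map Prod.fst).sum

/-- Number of factors of `τ` in a chain. -/
def tauCount (c : List (ℕ × ℕ)) : ℕ := (c.map Prod.snd).sum

/-- The length `Σ (l_i + m_i)` of a chain. -/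
def chainLen (c : List (ℕ × ℕ)) : ℕ := sigmaCount c + tauCount c

/-- A Whitehead automorphism of type (W1): it permutes `{a, a⁻¹, b, b⁻¹}`. -/
def IsW1 (β : MulAut F) : Prop :=
  β ga ∈ ({ga, ga⁻¹, gb, gb⁻¹} : Set F) ∧ β gb ∈ ({ga, ga⁻¹, gb, gb⁻¹} : Set F)

/-- A chain of type (C1). -/
def IsC1 (φ : MulAut F) : Prop := ∃ c : List (ℕ × ℕ), c ≠ [] ∧ φ = chainC1 c

/-- A chain of type (C2). -/
def IsC2 (φ : MulAut F) : Prop := ∃ c : List (ℕ × ℕ), c ≠ [] ∧ φ = chainC2 c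

/-- A positive element: a product of the generators `a` and `b`. -/
def IsPositive (w : F) : Prop := w ∈ Submonoid.closure ({ga, gb} : Set F)

/-- The four automorphisms `δ₁, δ₂, δ₃, δ₄`. -/
def δIdx : Fin 4 → MulAut F := ![δ₁, δ₂, δ₃, δ₄]

/-!
Cut a cyclic word at its letters `a ^ ±1`; the gaps between them are powers `b ^ n`. Since `σ`
fixes `b` and maps `a` to `ab`, it adds `1` to every gap between two letters `a`, subtracts `1` from
every gap between two letters `a⁻¹` and keeps all other gaps. The *defect* of the word is the number
of letters `b ^ ±1` that iterating `σ` cancels. It is at most the cyclic length, each `σ` decreases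
it unless it is zero, and once it is zero each further `σ` adds the same constant to the cyclic
length, which yields both claims.

It remains to see that `τ` does not increase the defect. By symmetry, `τ` shifts the gaps between
letters `b ^ ±1` in the same way, from which one reads off that a letter `b ^ ε` without a
neighbour `a ^ ε` in the image had the neighbour `a ^ -ε` on both sides before. The defect is at
most the number of letters of the former kind, and at least the number of letters of the latter
kind.
-/

/-! ### Cyclic length -/

section CyclicLength

variable {α : Type*}

theorem isReduced_append_self {L : List (α × Bool)} (h : FreeGroup.IsCyclicallyReduced L) :
    FreeGroup.IsReduced (L ++ L) := by
  simpa [List.replicate_succ] using (h.flatten_replicate 2).isReduced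

theorem isCyclicallyReduced_append_singleton_iff {L : List (α × Bool)} {x : α × Bool} :
    FreeGroup.IsCyclicallyReduced (L ++ [x]) ↔ FreeGroup.IsReduced (x :: (L ++ [x])) := by
  rw [FreeGroup.isCyclicallyReduced_iff, FreeGroup.IsReduced, FreeGroup.IsReduced,
    List.isChain_cons, and_comm]
  simp

theorem isConj_mk_of_isRotated {L M : List (α × Bool)} (h : L ~r M) :
    IsConj (FreeGroup.mk L) (FreeGroup.mk M) := by
  obtain ⟨n, rfl⟩ := h
  have split : FreeGroup.mk L =
      FreeGroup.mk (L.take (n % L.length)) * FreeGroup.mk (L.drop (n % L.length)) := by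
    rw [FreeGroup.mul_mk, List.take_append_drop]
  rw [List.rotate_eq_drop_append_take_mod, ← FreeGroup.mul_mk, split]
  exact isConj_iff.2 ⟨(FreeGroup.mk (L.take (n % L.length)))⁻¹, by group⟩

theorem exists_isCyclicallyReduced_isConj_mk (w : FreeGroup α) :
    ∃ L, FreeGroup.IsCyclicallyReduced L ∧ IsConj w (FreeGroup.mk L) := by
  classical
  refine ⟨FreeGroup.reduceCyclically w.toWord,
    FreeGroup.reduceCyclically.isCyclicallyReduced FreeGroup.isReduced_toWord,
    (isConj_iff.2 ⟨FreeGroup.mk (FreeGroup.reduceCyclically.conjugator w.toWord), ?_⟩).symm⟩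
  rw [FreeGroup.inv_mk, FreeGroup.mul_mk, FreeGroup.mul_mk,
    FreeGroup.reduceCyclically.conj_conjugator_reduceCyclically, FreeGroup.mk_toWord]

variable [DecidableEq α]

theorem norm_mk_of_isReduced {L : List (α × Bool)} (h : FreeGroup.IsReduced L) :
    (FreeGroup.mk L).norm = L.length := by
  rw [FreeGroup.norm, FreeGroup.toWord_mk, h.reduce_eq]

theorem freeGroup_norm_pow_le (x : FreeGroup α) (n : ℕ) : (x ^ n).norm ≤ n * x.norm := by
  conv_lhs => rw [← FreeGroup.mk_toWord (x := x), FreeGroup.pow_mk]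
  simpa [FreeGroup.norm] using FreeGroup.norm_mk_le (L₁ := (List.replicate n x.toWord).flatten)

theorem norm_mk_pow_of_isCyclicallyReduced {L : List (α × Bool)}
    (h : FreeGroup.IsCyclicallyReduced L) (n : ℕ) :
    (FreeGroup.mk L ^ n).norm = n * L.length := by
  rw [FreeGroup.pow_mk, norm_mk_of_isReduced (h.flatten_replicate n).isReduced]
  simp

-- Compare the lengths of the `n`-th powers: conjugation by `g` costs at most `2 * g.norm`,
-- independently of `n`.
theorem length_le_norm_conj {L : List (α × Bool)} (h : FreeGroup.IsCyclicallyReduced L)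
    (g : FreeGroup α) : L.length ≤ (g * FreeGroup.mk L * g⁻¹).norm := by
  set v := g * FreeGroup.mk L * g⁻¹ with hv
  have power_bound (n : ℕ) : n * L.length ≤ 2 * g.norm + n * v.norm := by
    have hpow : FreeGroup.mk L ^ n = g⁻¹ * v ^ n * g := by rw [hv, conj_pow]; group
    calc n * L.length = (g⁻¹ * v ^ n * g).norm := by
          rw [← hpow, norm_mk_pow_of_isCyclicallyReduced h]
      _ ≤ (g⁻¹).norm + (v ^ n).norm + g.norm :=
          (FreeGroup.norm_mul_le _ _).trans (Nat.add_le_add_right (FreeGroup.norm_mul_le _ _) _)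
      _ ≤ 2 * g.norm + n * v.norm := by
          rw [FreeGroup.norm_inv_eq]
          linarith [freeGroup_norm_pow_le v n]
  by_contra! hlt
  nlinarith [power_bound (2 * g.norm + 1)]

end CyclicLength

theorem cyclen_eq_length {w : F} {L : List (Fin 2 × Bool)}
    (hL : FreeGroup.IsCyclicallyReduced L) (hw : IsConj w (FreeGroup.mk L)) :
    cyclen w = L.length := by
  obtain ⟨c, hc⟩ := isConj_iff.1 hw
  refine le_antisymm (Nat.sInf_le ⟨c, ?_⟩) (le_csInf ⟨_, 1, rfl⟩ ?_)
  · rw [hc]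
    exact norm_mk_of_isReduced hL.isReduced
  · rintro _ ⟨g, rfl⟩
    have hg : g * w * g⁻¹ = g * c⁻¹ * FreeGroup.mk L * (g * c⁻¹)⁻¹ := by rw [← hc]; group
    rw [hg]
    exact length_le_norm_conj hL _

theorem cyclen_eq_of_isConj {v w : F} (h : IsConj v w) : cyclen v = cyclen w := by
  obtain ⟨L, hL, hw⟩ := exists_isCyclicallyReduced_isConj_mk w
  rw [cyclen_eq_length hL hw, cyclen_eq_length hL (h.trans hw)]

theorem isConj_mulAut_apply {v w : F} (φ : MulAut F) (h : IsConj v w) : IsConj (φ v) (φ w) :=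
  φ.toMonoidHom.map_isConj h

/-! ### Counting windows -/

section Windows

variable {α : Type*}

/-- The number of triples of consecutive letters of a word that satisfy `p`. -/
def windowCount (p : α → α → α → Bool) : List α → ℕ
  | x :: y :: z :: L => (p x y z).toNat + windowCount p (y :: z :: L)
  | _ => 0

/-- The number of triples of cyclically consecutive letters of a word that satisfy `p`, each
letter being the middle of one triple; a word of length one gives the triple `x, x, x`. -/
def cyclicWindowCount (p : α → α → α → Bool) (L : List α) : ℕ :=
  windowCount p (L.getLast?.toList ++ L ++ L.head?.toList)

variable {p : α → α → α → Bool}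

theorem windowCount_append_cons_cons (A B : List α) (u v : α) :
    windowCount p (A ++ u :: v :: B) =
      windowCount p (A ++ [u, v]) + windowCount p (u :: v :: B) := by
  induction A with
  | nil => simp [windowCount]
  | cons x A ih =>
    rcases A with _ | ⟨y, _ | ⟨z, A⟩⟩ <;>
      simp only [List.cons_append, List.nil_append, windowCount] at ih ⊢ <;> omega

theorem windowCount_append_cons {y : α} (hy : ∀ x z, p x y z = false) (A B : List α) :
    windowCount p (A ++ y :: B) = windowCount p (A ++ [y]) + windowCount p (y :: B) := by
  rcases List.eq_nil_or_concat A with rfl | ⟨A, x, rfl⟩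
  · simp [windowCount]
  · rcases B with _ | ⟨z, B⟩
    · simp [windowCount]
    · have split := windowCount_append_cons_cons (p := p) A (z :: B) x y
      rw [windowCount, hy] at split
      simpa using split

theorem windowCount_cons_cons {y : α} (hy : ∀ x z, p x y z = false) (x : α) (B : List α) :
    windowCount p (x :: y :: B) = windowCount p (y :: B) := by
  cases B <;> simp [windowCount, hy]

theorem windowCount_cons_replicate {y : α} (hy : ∀ x z, p x y z = false) (x : α) (k : ℕ)
    (B : List α) : windowCount p (x :: (List.replicate (k + 1) y ++ B)) =
      windowCount p (y :: B) := by
  induction k generalizing x with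
  | zero => exact windowCount_cons_cons hy x B
  | succ k ih => rw [List.replicate_succ, List.cons_append, windowCount_cons_cons hy, ih]

theorem windowCount_cons_replicate_append (x y z : α) (k : ℕ) :
    windowCount p (x :: (List.replicate (k + 2) y ++ [z])) =
      (p x y y).toNat + k * (p y y y).toNat + (p y y z).toNat := by
  have inner (k : ℕ) : windowCount p (y :: (List.replicate (k + 1) y ++ [z])) =
      k * (p y y y).toNat + (p y y z).toNat := by
    induction k with
    | zero => simp [windowCount]
    | succ k ih =>
      simp only [List.replicate_succ, List.cons_append, windowCount] at ih ⊢
      rw [ih]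
      ring
  have hk := inner k
  simp only [List.replicate_succ, List.cons_append, windowCount] at hk ⊢
  rw [hk]
  ring

theorem cyclicWindowCount_cons (x : α) (L : List α) :
    cyclicWindowCount p (x :: L) = cyclicWindowCount p (L ++ [x]) := by
  rcases List.eq_nil_or_concat L with rfl | ⟨Q, l, rfl⟩
  · rfl
  · rcases Q with _ | ⟨y, Q⟩
    · simp [cyclicWindowCount, windowCount, add_comm]
    · have split := windowCount_append_cons_cons (p := p) (x :: y :: Q) [y] l x
      simp only [List.cons_append, windowCount] at split
      simp only [cyclicWindowCount, List.concat_eq_append, List.cons_append, List.getLast?_cons,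
        List.getLast?_append, List.getLast?_nil, Option.getD_none, Option.some_or,
        Option.getD_some, Option.toList_some, List.nil_append, List.head?_cons,
        List.append_assoc, windowCount, split, add_zero]
      omega

theorem cyclicWindowCount_concat {y : α} (hy : ∀ x z, p x y z = false) (L : List α) :
    cyclicWindowCount p (L ++ [y]) = windowCount p (y :: (L ++ [y])) := by
  rcases L with _ | ⟨x, L⟩
  · simp [cyclicWindowCount, windowCount, hy]
  · have split := windowCount_append_cons hy (y :: x :: L) [x]
    simpa [cyclicWindowCount, windowCount, List.getLast?_cons] using split

theorem windowCount_le_length_sub_two (p : α → α → α → Bool) (L : List α) :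
    windowCount p L ≤ L.length - 2 := by
  induction L with
  | nil => exact Nat.zero_le _
  | cons x L ih =>
    rcases L with _ | ⟨y, _ | ⟨z, L⟩⟩
    · exact Nat.zero_le _
    · exact Nat.zero_le _
    · have hle := Bool.toNat_le (p x y z)
      simp only [windowCount, List.length_cons] at ih ⊢
      omega

theorem cyclicWindowCount_le_length (p : α → α → α → Bool) (L : List α) :
    cyclicWindowCount p L ≤ L.length := by
  have hle := windowCount_le_length_sub_two p (L.getLast?.toList ++ L ++ L.head?.toList)
  have hlast : L.getLast?.toList.length ≤ 1 := by cases L.getLast? <;> simp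
  have hhead : L.head?.toList.length ≤ 1 := by cases L.head? <;> simp
  simp only [List.length_append] at hle
  exact hle.trans (by omega)

theorem windowCount_eq_zero {L : List α} (h : ∀ x ∈ L, ∀ y ∈ L, ∀ z ∈ L, p x y z = false) :
    windowCount p L = 0 := by
  induction L with
  | nil => rfl
  | cons x L ih =>
    have hL := ih fun x hx y hy z hz => h x (.tail _ hx) y (.tail _ hy) z (.tail _ hz)
    rcases L with _ | ⟨y, _ | ⟨z, L⟩⟩
    · rfl
    · rfl
    · simp [windowCount, hL, h x (by simp) y (by simp) z (by simp)]

theorem cyclicWindowCount_eq_zero {L : List α}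
    (h : ∀ x ∈ L, ∀ y ∈ L, ∀ z ∈ L, p x y z = false) : cyclicWindowCount p L = 0 := by
  have mem {x : α} (hx : x ∈ L.getLast?.toList ++ L ++ L.head?.toList) : x ∈ L := by
    simp only [List.mem_append, Option.mem_toList] at hx
    rcases hx with (hx | hx) | hx
    exacts [List.mem_of_getLast? hx, hx, List.mem_of_head? hx]
  exact windowCount_eq_zero fun x hx y hy z hz => h x (mem hx) y (mem hy) z (mem hz)

theorem cyclicWindowCount_eq_of_isRotated {L M : List α} (h : L ~r M) :
    cyclicWindowCount p L = cyclicWindowCount p M := by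
  obtain ⟨n, rfl⟩ := h
  induction n generalizing L with
  | zero => simp
  | succ n ih =>
    rcases L with _ | ⟨x, L⟩
    · simp
    · rw [cyclicWindowCount_cons, List.rotate_cons_succ, ← ih]

end Windows

/-! ### Gap words and transvections -/

section GapWords

/-- The transvection multiplying the generator `i` on the right by the other generator `i.rev`,
so that `σ` and `τ` can be treated together. -/
def transvection : Fin 2 → MulAut F := ![σ, τ]

theorem transvection_of (i : Fin 2) :
    transvection i (FreeGroup.of i) = FreeGroup.of i * FreeGroup.of i.rev := by
  fin_cases i <;> simp [transvection, σ, τ, mkAut, ga, gb, Fin.rev]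

theorem transvection_of_rev (i : Fin 2) :
    transvection i (FreeGroup.of i.rev) = FreeGroup.of i.rev := by
  fin_cases i <;> simp [transvection, σ, τ, mkAut, ga, gb, Fin.rev]

/-- The reduced word representing the power `j ^ n` of the generator `j`. -/
def genPow (j : Fin 2) (n : ℤ) : List (Fin 2 × Bool) :=
  List.replicate n.natAbs (j, decide (0 ≤ n))

/-- The word `j ^ n₁ i ^ ε₁ ⋯ j ^ nₖ i ^ εₖ` with `j = i.rev`, encoded by the list of its gaps
`(n₁, ε₁), …, (nₖ, εₖ)`. Read after an initial letter `i ^ ε₀`, the gap `nᵣ` lies between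
`i ^ εᵣ₋₁` and `i ^ εᵣ`. -/
def gapWord (i : Fin 2) (G : List (ℤ × Bool)) : List (Fin 2 × Bool) :=
  G.flatMap fun g => genPow i.rev g.1 ++ [(i, g.2)]

/-- The sign of the last occurrence of `i` in the word `i ^ e` followed by `gapWord i G`. -/
def lastSign (e : Bool) (G : List (ℤ × Bool)) : Bool := G.foldl (fun _ g => g.2) e

/-- No zero gap separates letters of opposite signs: the word `i ^ e` followed by `gapWord i G`
is reduced. -/
def IsReducedGaps : Bool → List (ℤ × Bool) → Prop
  | _, [] => True
  | e, (n, t) :: G => (e ≠ t → n ≠ 0) ∧ IsReducedGaps t G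

/-- The change under `transvection i` of a gap between letters `i ^ e` and `i ^ t`. -/
def gapShift (e t : Bool) : ℤ := e.toNat + t.toNat - 1

/-- The effect of `transvection i` on the gaps following a letter `i ^ e`. -/
def shiftGaps : Bool → List (ℤ × Bool) → List (ℤ × Bool)
  | _, [] => []
  | e, (n, t) :: G => (n + gapShift e t, t) :: shiftGaps t G

variable {i : Fin 2} {e : Bool} {n : ℤ} {t : Bool} {G : List (ℤ × Bool)}

theorem gapShift_comm (e t : Bool) : gapShift e t = gapShift t e := by
  cases e <;> cases t <;> rfl

@[simp] theorem gapWord_nil (i : Fin 2) : gapWord i [] = [] := rfl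

@[simp] theorem gapWord_cons (i : Fin 2) (n : ℤ) (t : Bool) (G : List (ℤ × Bool)) :
    gapWord i ((n, t) :: G) = genPow i.rev n ++ (i, t) :: gapWord i G := by
  simp [gapWord]

theorem gapWord_concat (i : Fin 2) (G : List (ℤ × Bool)) (n : ℤ) (t : Bool) :
    gapWord i (G ++ [(n, t)]) = gapWord i G ++ genPow i.rev n ++ [(i, t)] := by
  simp [gapWord]

@[simp] theorem lastSign_cons (e : Bool) (g : ℤ × Bool) (G : List (ℤ × Bool)) :
    lastSign e (g :: G) = lastSign g.2 G := rfl

theorem lastSign_concat (e : Bool) (G : List (ℤ × Bool)) (n : ℤ) (t : Bool) :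
    lastSign e (G ++ [(n, t)]) = t := by
  simp [lastSign]

theorem lastSign_shiftGaps (e : Bool) (G : List (ℤ × Bool)) :
    lastSign e (shiftGaps e G) = lastSign e G := by
  induction G generalizing e with
  | nil => rfl
  | cons g _ ih => exact ih g.2

theorem shiftGaps_concat (e : Bool) (G : List (ℤ × Bool)) (n : ℤ) (t : Bool) :
    shiftGaps e (G ++ [(n, t)]) = shiftGaps e G ++ [(n + gapShift (lastSign e G) t, t)] := by
  induction G generalizing e with
  | nil => rfl
  | cons g G ih => simp [shiftGaps, ih]

theorem isReducedGaps_concat :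
    IsReducedGaps e (G ++ [(n, t)]) ↔ IsReducedGaps e G ∧ (lastSign e G ≠ t → n ≠ 0) := by
  induction G generalizing e with
  | nil => simp [IsReducedGaps, lastSign]
  | cons g G ih => simp [IsReducedGaps, ih, and_assoc]

theorem IsReducedGaps.shiftGaps (h : IsReducedGaps e G) : IsReducedGaps e (shiftGaps e G) := by
  induction G generalizing e with
  | nil => trivial
  | cons g G ih =>
    refine ⟨fun hne => ?_, ih h.2⟩
    have hn := h.1 hne
    cases e <;> cases ht : g.2 <;> simp_all [gapShift]

theorem mk_genPow (j : Fin 2) (n : ℤ) : FreeGroup.mk (genPow j n) = FreeGroup.of j ^ n := by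
  rcases n with k | k
  · simp [genPow, FreeGroup.of, FreeGroup.pow_mk]
  · rw [zpow_negSucc, ← inv_pow, FreeGroup.of, FreeGroup.inv_mk, FreeGroup.pow_mk]
    simp [genPow, FreeGroup.invRev]

theorem isReduced_cons_genPow_append_iff (R : List (Fin 2 × Bool)) :
    FreeGroup.IsReduced ((i, e) :: (genPow i.rev n ++ (i, t) :: R)) ↔
      (e ≠ t → n ≠ 0) ∧ FreeGroup.IsReduced ((i, t) :: R) := by
  have hi : i.rev ≠ i := by fin_cases i <;> decide
  rcases eq_or_ne n 0 with rfl | hn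
  · simp [genPow, FreeGroup.IsReduced]
  · rw [← List.cons_append]
    simp [genPow, FreeGroup.IsReduced, List.isChain_append, List.isChain_cons,
      List.isChain_replicate_of_rel, List.head?_replicate, List.getLast?_replicate, hi, hi.symm, hn]

theorem isReduced_cons_gapWord_iff :
    FreeGroup.IsReduced ((i, e) :: gapWord i G) ↔ IsReducedGaps e G := by
  induction G generalizing e with
  | nil => simp [IsReducedGaps]
  | cons g G ih => rw [gapWord_cons, isReduced_cons_genPow_append_iff, ih, IsReducedGaps]

theorem transvection_mk_letter (i : Fin 2) (t : Bool) :
    transvection i (FreeGroup.mk [(i, t)]) = FreeGroup.of i.rev ^ ((t.toNat : ℤ) - 1) *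
      FreeGroup.mk [(i, t)] * FreeGroup.of i.rev ^ (t.toNat : ℤ) := by
  have hof := transvection_of i
  cases t
  · have hinv : FreeGroup.mk [(i, false)] = (FreeGroup.of i)⁻¹ := rfl
    simp [hinv, hof]
  · have hgen : FreeGroup.mk [(i, true)] = FreeGroup.of i := rfl
    simp [hgen, hof]

theorem transvection_mk_gapWord (i : Fin 2) (e : Bool) (G : List (ℤ × Bool)) :
    FreeGroup.of i.rev ^ (e.toNat : ℤ) * transvection i (FreeGroup.mk (gapWord i G)) =
      FreeGroup.mk (gapWord i (shiftGaps e G)) *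
        FreeGroup.of i.rev ^ ((lastSign e G).toNat : ℤ) := by
  induction G generalizing e with
  | nil => simp [shiftGaps, lastSign, ← FreeGroup.one_eq_mk]
  | cons g G ih =>
    obtain ⟨n, t⟩ := g
    have split (n : ℤ) (G : List (ℤ × Bool)) : FreeGroup.mk (gapWord i ((n, t) :: G)) =
        FreeGroup.of i.rev ^ n * FreeGroup.mk [(i, t)] * FreeGroup.mk (gapWord i G) := by
      rw [← mk_genPow, FreeGroup.mul_mk, FreeGroup.mul_mk]
      simp
    have shift : FreeGroup.of i.rev ^ (n + gapShift e t) = FreeGroup.of i.rev ^ (e.toNat : ℤ) *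
        FreeGroup.of i.rev ^ n * FreeGroup.of i.rev ^ ((t.toNat : ℤ) - 1) := by
      rw [← zpow_add, ← zpow_add, gapShift]
      congr 1
      ring
    rw [shiftGaps, split, split, lastSign_cons, map_mul, map_mul, map_zpow, transvection_of_rev,
      transvection_mk_letter, mul_assoc _ (FreeGroup.mk (gapWord i _)), ← ih t, shift]
    simp only [mul_assoc]

theorem cons_genPow {j : Fin 2} {f : Bool}
    (h : FreeGroup.IsReduced ((j, f) :: genPow j n)) :
    (j, f) :: genPow j n = genPow j (n + if f then 1 else -1) := by
  have same_sign : n ≠ 0 → f = decide (0 ≤ n) := by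
    intro hn
    obtain ⟨k, hk⟩ := Nat.exists_eq_succ_of_ne_zero (Int.natAbs_ne_zero.2 hn)
    rw [genPow, hk, List.replicate_succ, FreeGroup.IsReduced, List.isChain_cons_cons] at h
    exact h.1 rfl
  rcases eq_or_ne n 0 with rfl | hn
  · cases f <;> rfl
  · have sign : decide (0 ≤ n + if f then 1 else -1) = decide (0 ≤ n) := by
      grind
    have natAbs : (n + if f then 1 else -1).natAbs = n.natAbs + 1 := by
      grind
    rw [genPow, genPow, sign, natAbs, List.replicate_succ, ← same_sign hn]

theorem exists_gapWord_eq {L : List (Fin 2 × Bool)} (h : FreeGroup.IsReduced (L ++ [(i, e)])) :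
    ∃ G, gapWord i G = L ++ [(i, e)] := by
  induction L with
  | nil => exact ⟨[(0, e)], rfl⟩
  | cons x L ih =>
    obtain ⟨j, f⟩ := x
    obtain ⟨G, hG⟩ := ih h.tail
    by_cases hj : j = i
    · exact ⟨(0, f) :: G, by simp [genPow, hG, hj]⟩
    · obtain rfl : j = i.rev := (by decide : ∀ i j : Fin 2, j ≠ i → j = i.rev) i j hj
      rcases G with _ | ⟨⟨n, t⟩, G⟩
      · simp at hG
      · refine ⟨(n + if f then 1 else -1, t) :: G, ?_⟩
        rw [List.cons_append, ← hG, gapWord_cons, ← List.cons_append] at h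
        rw [List.cons_append, ← hG, gapWord_cons, gapWord_cons,
          ← cons_genPow (h.infix (List.prefix_append _ _).isInfix), List.cons_append]

end GapWords

/-! ### Defect and growth -/

section Defect

variable {i : Fin 2} {e : Bool} {G : List (ℤ × Bool)} {w : F}

/-- The number of letters of a gap `n` between letters `i ^ e` and `i ^ t` that iterating
`transvection i` cancels, one at a time. -/
def gapDefect (e : Bool) (n : ℤ) (t : Bool) : ℕ := (-(gapShift e t * n)).toNat

/-- The total defect of the gaps following a letter `i ^ e`. -/
def defect : Bool → List (ℤ × Bool) → ℕ
  | _, [] => 0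
  | e, (n, t) :: G => gapDefect e n t + defect t G

/-- The increase in the total length of the gaps following a letter `i ^ e` under
`transvection i`, once no gap gets shorter. -/
def growth : Bool → List (ℤ × Bool) → ℕ
  | _, [] => 0
  | e, (_, t) :: G => (gapShift e t).natAbs + growth t G

theorem growth_shiftGaps (e : Bool) (G : List (ℤ × Bool)) :
    growth e (shiftGaps e G) = growth e G := by
  induction G generalizing e with
  | nil => rfl
  | cons g G ih => simp [shiftGaps, growth, ih]

theorem gapDefect_add_gapShift_le (e t : Bool) (n : ℤ) :
    gapDefect e (n + gapShift e t) t ≤ gapDefect e n t - 1 := by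
  cases e <;> cases t <;> simp only [gapDefect, gapShift, Bool.toNat_true, Bool.toNat_false] <;>
    omega

theorem defect_shiftGaps_le (e : Bool) (G : List (ℤ × Bool)) :
    defect e (shiftGaps e G) ≤ defect e G - 1 := by
  induction G generalizing e with
  | nil => simp [shiftGaps, defect]
  | cons g G ih =>
    have hgap := gapDefect_add_gapShift_le e g.2 g.1
    have hG := ih g.2
    simp only [shiftGaps, defect]
    omega

theorem natAbs_add_gapShift {t : Bool} {n : ℤ} (h : gapDefect e n t = 0) :
    (n + gapShift e t).natAbs = n.natAbs + (gapShift e t).natAbs := by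
  cases e <;> cases t <;>
    simp only [gapDefect, gapShift, Bool.toNat_true, Bool.toNat_false] at h ⊢ <;>
    omega

theorem length_gapWord_shiftGaps (i : Fin 2) (h : defect e G = 0) :
    (gapWord i (shiftGaps e G)).length = (gapWord i G).length + growth e G := by
  induction G generalizing e with
  | nil => rfl
  | cons g G ih =>
    obtain ⟨n, t⟩ := g
    obtain ⟨hgap, hG⟩ := Nat.add_eq_zero_iff.1 h
    simp only [shiftGaps, gapWord_cons, genPow, growth, List.length_append, List.length_replicate,
      List.length_cons, natAbs_add_gapShift hgap, ih hG]
    ring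

/-- The cyclic gaps `G` describe the conjugacy class of `w` in terms of its letters `i ^ ±1`: as
`i ^ e` is the last of these, the first gap follows it cyclically, and `gapWord i G` is a
cyclically reduced conjugate of `w`. -/
structure IsGapForm (i : Fin 2) (e : Bool) (G : List (ℤ × Bool)) (w : F) : Prop where
  isReducedGaps : IsReducedGaps e G
  lastSign_eq : lastSign e G = e
  isConj : IsConj w (FreeGroup.mk (gapWord i G))

theorem IsGapForm.isCyclicallyReduced (h : IsGapForm i e G w) :
    FreeGroup.IsCyclicallyReduced (gapWord i G) := by
  have hred := isReduced_cons_gapWord_iff (i := i).2 h.isReducedGaps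
  have hlast := h.lastSign_eq
  rcases List.eq_nil_or_concat' G with rfl | ⟨H, ⟨n, t⟩, rfl⟩
  · exact .nil
  · rw [lastSign_concat] at hlast
    subst hlast
    rw [gapWord_concat] at hred ⊢
    exact isCyclicallyReduced_append_singleton_iff.2 hred

theorem IsGapForm.cyclen_eq (h : IsGapForm i e G w) : cyclen w = (gapWord i G).length :=
  cyclen_eq_length h.isCyclicallyReduced h.isConj

theorem IsGapForm.transvection_apply (h : IsGapForm i e G w) :
    IsGapForm i e (shiftGaps e G) (transvection i w) where
  isReducedGaps := h.isReducedGaps.shiftGaps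
  lastSign_eq := (lastSign_shiftGaps e G).trans h.lastSign_eq
  isConj := by
    refine (isConj_mulAut_apply (transvection i) h.isConj).trans (isConj_iff.2
      ⟨FreeGroup.of i.rev ^ (e.toNat : ℤ), ?_⟩)
    rw [mul_inv_eq_iff_eq_mul]
    simpa only [h.lastSign_eq] using transvection_mk_gapWord i e G

theorem exists_isGapForm {L : List (Fin 2 × Bool)} (hL : FreeGroup.IsCyclicallyReduced L)
    (hmem : (i, e) ∈ L) (hw : IsConj w (FreeGroup.mk L)) :
    ∃ G, IsGapForm i e G w ∧ L ~r gapWord i G := by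
  obtain ⟨K, M, rfl⟩ := List.append_of_mem hmem
  have hrot : K ++ (i, e) :: M ~r M ++ K ++ [(i, e)] := by
    simpa using List.isRotated_append (l := K ++ [(i, e)]) (l' := M)
  have hred : FreeGroup.IsReduced ((i, e) :: (M ++ K ++ [(i, e)])) :=
    (isReduced_append_self hL).infix ⟨K, M, by simp⟩
  obtain ⟨G, hG⟩ := exists_gapWord_eq hred.tail
  refine ⟨G, ⟨?_, ?_, ?_⟩, hG ▸ hrot⟩
  · rwa [← isReduced_cons_gapWord_iff (i := i), hG]
  · rcases List.eq_nil_or_concat' G with rfl | ⟨H, ⟨n, t⟩, rfl⟩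
    · rfl
    · rw [gapWord_concat] at hG
      simpa [lastSign_concat] using (List.append_inj' hG rfl).2
  · exact hw.trans (isConj_mk_of_isRotated (hG ▸ hrot))

end Defect

/-! ### Opposed and unsupported letters -/

section Support

/-- The middle letter `b ^ ε` of the triple has a neighbour `a ^ -ε` on both sides. -/
def opposed (x y z : Fin 2 × Bool) : Bool := y.1 = 1 ∧ x = (0, !y.2) ∧ z = (0, !y.2)

/-- The middle letter `b ^ ε` of the triple has a neighbour `a ^ ε` on neither side. -/
def unsupported (x y z : Fin 2 × Bool) : Bool := y.1 = 1 ∧ x ≠ (0, y.2) ∧ z ≠ (0, y.2)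

theorem opposed_zero (x z : Fin 2 × Bool) (e : Bool) : opposed x (0, e) z = false := by
  simp [opposed]

theorem unsupported_zero (x z : Fin 2 × Bool) (e : Bool) : unsupported x (0, e) z = false := by
  simp [unsupported]

variable {p : Fin 2 × Bool → Fin 2 × Bool → Fin 2 × Bool → Bool}
  {e t : Bool} {n : ℤ} {G : List (ℤ × Bool)}

theorem windowCount_opposed_gap_le (e t : Bool) (n : ℤ) :
    windowCount opposed ((0, e) :: (genPow 1 n ++ [(0, t)])) ≤ gapDefect e n t := by
  rcases hn : n.natAbs with _ | _ | k
  · simp [genPow, hn, windowCount]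
  · rcases Int.natAbs_eq_iff.1 hn with rfl | rfl <;> revert e t <;> decide
  · rw [genPow, hn, windowCount_cons_replicate_append]
    simp [opposed]

theorem gapDefect_le_windowCount_unsupported (e t : Bool) (n : ℤ) :
    gapDefect e n t ≤ windowCount unsupported ((0, e) :: (genPow 1 n ++ [(0, t)])) := by
  rcases hn : n.natAbs with _ | _ | k
  · simp [gapDefect, Int.natAbs_eq_zero.1 hn]
  · rcases Int.natAbs_eq_iff.1 hn with rfl | rfl <;> revert e t <;> decide
  · rw [genPow, hn, windowCount_cons_replicate_append]
    rcases le_or_gt 0 n with hsign | hsign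
    · cases e <;> cases t <;> simp [gapDefect, gapShift, unsupported, hsign] <;> omega
    · cases e <;> cases t <;> simp [gapDefect, gapShift, unsupported, hsign.not_ge] <;> omega

theorem windowCount_gapWord_zero_cons (hp : ∀ x z e, p x (0, e) z = false) (e : Bool) (n : ℤ)
    (t : Bool) (G : List (ℤ × Bool)) :
    windowCount p ((0, e) :: gapWord 0 ((n, t) :: G)) =
      windowCount p ((0, e) :: (genPow 1 n ++ [(0, t)])) +
        windowCount p ((0, t) :: gapWord 0 G) := by
  rw [gapWord_cons, ← List.cons_append, windowCount_append_cons (hp · · t)]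
  rfl

theorem windowCount_opposed_le_defect (e : Bool) (G : List (ℤ × Bool)) :
    windowCount opposed ((0, e) :: gapWord 0 G) ≤ defect e G := by
  induction G generalizing e with
  | nil => rfl
  | cons g G ih =>
    rw [windowCount_gapWord_zero_cons opposed_zero]
    exact Nat.add_le_add (windowCount_opposed_gap_le ..) (ih g.2)

theorem defect_le_windowCount_unsupported (e : Bool) (G : List (ℤ × Bool)) :
    defect e G ≤ windowCount unsupported ((0, e) :: gapWord 0 G) := by
  induction G generalizing e with
  | nil => exact Nat.zero_le _
  | cons g G ih =>
    rw [windowCount_gapWord_zero_cons unsupported_zero]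
    exact Nat.add_le_add (gapDefect_le_windowCount_unsupported ..) (ih g.2)

theorem cyclicWindowCount_gapWord_zero (hp : ∀ x z e, p x (0, e) z = false)
    (h : lastSign e G = e) :
    cyclicWindowCount p (gapWord 0 G) = windowCount p ((0, e) :: gapWord 0 G) := by
  rcases List.eq_nil_or_concat' G with rfl | ⟨H, ⟨n, t⟩, rfl⟩
  · rfl
  · rw [lastSign_concat] at h
    subst h
    rw [gapWord_concat, cyclicWindowCount_concat (hp · · t)]

/-- The letter next to an end of the gap `n` at which a letter `b ^ ±1` stands, the letter at the
other end being `b ^ s`: it is a letter `a ^ ±1` of the gap, or `b ^ s` if the gap is empty. -/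
def neighbour (s : Bool) (n : ℤ) : Fin 2 × Bool := if n = 0 then (1, s) else (0, decide (0 ≤ n))

theorem neighbour_eq_zero_iff {s f : Bool} :
    neighbour s n = (0, f) ↔ n ≠ 0 ∧ decide (0 ≤ n) = f := by
  unfold neighbour
  split <;> simp_all

theorem neighbour_eq_of_neighbour_add_gapShift_ne (hn : e ≠ t → n ≠ 0)
    (h : neighbour e (n + gapShift e t) ≠ (0, t)) : neighbour e n = (0, !t) := by
  rw [ne_eq, neighbour_eq_zero_iff] at h
  rw [neighbour_eq_zero_iff]
  cases e <;> cases t <;> grind [gapShift]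

theorem windowCount_gapWord_one_cons (hp : ∀ x z e, p x (0, e) z = false) (x : Fin 2 × Bool)
    (e : Bool) (n : ℤ) (t : Bool) (G : List (ℤ × Bool)) :
    windowCount p (x :: (1, e) :: gapWord 1 ((n, t) :: G)) =
      (p x (1, e) (neighbour t n)).toNat +
        windowCount p (neighbour e n :: (1, t) :: gapWord 1 G) := by
  have hword : gapWord 1 ((n, t) :: G) = genPow 0 n ++ (1, t) :: gapWord 1 G := gapWord_cons 1 n t G
  rw [hword]
  rcases hn : n.natAbs with _ | k
  · simp [genPow, neighbour, Int.natAbs_eq_zero.1 hn, windowCount]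
  · have hn0 : n ≠ 0 := by omega
    rw [neighbour, neighbour, if_neg hn0, if_neg hn0,
      ← windowCount_cons_replicate (hp · · _) (1, e) k, genPow, hn]
    rfl

theorem windowCount_unsupported_shiftGaps_le (hG : IsReducedGaps e G) {x y : Fin 2 × Bool}
    (hxy : x ≠ (0, e) → y = (0, !e)) :
    windowCount unsupported (x :: (1, e) :: gapWord 1 (shiftGaps e G)) ≤
      windowCount opposed (y :: (1, e) :: gapWord 1 G) := by
  induction G generalizing e x y with
  | nil => rfl
  | cons g G ih =>
    obtain ⟨n, t⟩ := g
    rw [shiftGaps, windowCount_gapWord_one_cons unsupported_zero,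
      windowCount_gapWord_one_cons opposed_zero]
    have right : neighbour t (n + gapShift e t) ≠ (0, e) → neighbour t n = (0, !e) := by
      rw [gapShift_comm]
      exact neighbour_eq_of_neighbour_add_gapShift_ne fun hne => hG.1 hne.symm
    have left := neighbour_eq_of_neighbour_add_gapShift_ne hG.1
    refine Nat.add_le_add (Bool.toNat_le_toNat ?_) (ih hG.2 left)
    simp only [Bool.le_iff_imp, unsupported, opposed, decide_eq_true_eq]
    exact fun h => ⟨trivial, hxy h.2.1, right h.2.2⟩

theorem getLast?_cons_gapWord_one_append (e : Bool) (G : List (ℤ × Bool)) (n : ℤ) :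
    ((1, e) :: (gapWord 1 G ++ genPow 0 n)).getLast? = some (neighbour (lastSign e G) n) := by
  by_cases hn : n = 0
  · rcases List.eq_nil_or_concat' G with rfl | ⟨H, ⟨m, t⟩, rfl⟩
    · simp [hn, genPow, neighbour, lastSign]
    · simp [hn, genPow, neighbour, lastSign_concat, gapWord_concat, List.getLast?_cons]
  · simp [hn, genPow, neighbour, List.getLast?_cons, List.getLast?_replicate]

theorem cyclicWindowCount_gapWord_one_concat (e : Bool) (G : List (ℤ × Bool)) (n : ℤ) :
    cyclicWindowCount p (gapWord 1 (G ++ [(n, e)])) =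
      windowCount p (neighbour (lastSign e G) n :: (1, e) :: gapWord 1 (G ++ [(n, e)])) := by
  have hword : gapWord 1 (G ++ [(n, e)]) = gapWord 1 G ++ genPow 0 n ++ [(1, e)] :=
    gapWord_concat 1 G n e
  rw [hword, ← cyclicWindowCount_cons, cyclicWindowCount, getLast?_cons_gapWord_one_append]
  simp

theorem cyclicWindowCount_unsupported_shiftGaps_le (hG : IsReducedGaps e G)
    (h : lastSign e G = e) :
    cyclicWindowCount unsupported (gapWord 1 (shiftGaps e G)) ≤
      cyclicWindowCount opposed (gapWord 1 G) := by
  rcases List.eq_nil_or_concat' G with rfl | ⟨H, ⟨n, t⟩, rfl⟩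
  · exact Nat.zero_le _
  · rw [lastSign_concat] at h
    subst h
    rw [cyclicWindowCount_gapWord_one_concat, shiftGaps_concat,
      cyclicWindowCount_gapWord_one_concat, lastSign_shiftGaps, ← shiftGaps_concat]
    exact windowCount_unsupported_shiftGaps_le hG
      (neighbour_eq_of_neighbour_add_gapShift_ne (isReducedGaps_concat.1 hG).2)

end Support

/-! ### The defect along chains -/

section Chains

variable {m : ℕ} {u w : F} {L : List (Fin 2 × Bool)}

/-- The conjugacy class of `w` has defect at most `m` with respect to `σ`; powers of `b`, whose
cyclic words have no gaps between letters `a ^ ±1`, count as having defect zero. -/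
def HasDefectLE (w : F) (m : ℕ) : Prop :=
  (∃ n : ℤ, IsConj w (gb ^ n)) ∨ ∃ e G, IsGapForm 0 e G w ∧ defect e G ≤ m

theorem exists_mk_eq_zpow {j : Fin 2} (h : ∀ x ∈ L, x.1 = j) :
    ∃ n : ℤ, FreeGroup.mk L = FreeGroup.of j ^ n := by
  induction L with
  | nil => exact ⟨0, rfl⟩
  | cons x L ih =>
    obtain ⟨n, hn⟩ := ih fun y hy => h y (.tail _ hy)
    obtain ⟨k, t⟩ := x
    obtain rfl : k = j := h _ (.head _)
    rw [← List.singleton_append, ← FreeGroup.mul_mk, hn]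
    cases t
    · exact ⟨-1 + n, by rw [zpow_add, zpow_neg_one]; rfl⟩
    · exact ⟨1 + n, by rw [zpow_add, zpow_one]; rfl⟩

theorem hasDefectLE_cyclicWindowCount_unsupported (hL : FreeGroup.IsCyclicallyReduced L)
    (hw : IsConj w (FreeGroup.mk L)) : HasDefectLE w (cyclicWindowCount unsupported L) := by
  by_cases ha : ∃ e, (0, e) ∈ L
  · obtain ⟨e, he⟩ := ha
    obtain ⟨G, hG, hrot⟩ := exists_isGapForm hL he hw
    refine .inr ⟨e, G, hG, ?_⟩
    rw [cyclicWindowCount_eq_of_isRotated hrot,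
      cyclicWindowCount_gapWord_zero unsupported_zero hG.lastSign_eq]
    exact defect_le_windowCount_unsupported e G
  · obtain ⟨n, hn⟩ := exists_mk_eq_zpow (L := L) (j := 1) fun x hx =>
      Fin.eq_one_of_ne_zero x.1 fun h0 => ha ⟨x.2, by rwa [← h0]⟩
    exact .inl ⟨n, hn ▸ hw⟩

theorem HasDefectLE.mono {k : ℕ} (h : HasDefectLE w k) (hk : k ≤ m) : HasDefectLE w m :=
  h.imp_right fun ⟨e, G, hG, hd⟩ => ⟨e, G, hG, hd.trans hk⟩

theorem hasDefectLE_cyclen (u : F) : HasDefectLE u (cyclen u) := by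
  obtain ⟨L, hL, hu⟩ := exists_isCyclicallyReduced_isConj_mk u
  rw [cyclen_eq_length hL hu]
  exact (hasDefectLE_cyclicWindowCount_unsupported hL hu).mono (cyclicWindowCount_le_length _ _)

theorem HasDefectLE.exists_cyclicWindowCount_opposed_le (h : HasDefectLE w m) :
    ∃ L, FreeGroup.IsCyclicallyReduced L ∧ IsConj w (FreeGroup.mk L) ∧
      cyclicWindowCount opposed L ≤ m := by
  rcases h with ⟨n, hn⟩ | ⟨e, G, hG, hd⟩
  · refine ⟨genPow 1 n, ?_, by rwa [mk_genPow], ?_⟩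
    · have hsingle := (FreeGroup.IsCyclicallyReduced.singleton
        (x := ((1 : Fin 2), decide (0 ≤ n)))).flatten_replicate n.natAbs
      simpa [genPow] using hsingle
    · rw [cyclicWindowCount_eq_zero]
      · exact Nat.zero_le _
      · intro x hx y _ z _
        simp [opposed, List.eq_of_mem_replicate hx]
  · refine ⟨gapWord 0 G, hG.isCyclicallyReduced, hG.isConj, ?_⟩
    rw [cyclicWindowCount_gapWord_zero opposed_zero hG.lastSign_eq]
    exact (windowCount_opposed_le_defect e G).trans hd

theorem exists_cyclicWindowCount_unsupported_le_opposed (hL : FreeGroup.IsCyclicallyReduced L)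
    (hw : IsConj w (FreeGroup.mk L)) :
    ∃ M, FreeGroup.IsCyclicallyReduced M ∧ IsConj (τ w) (FreeGroup.mk M) ∧
      cyclicWindowCount unsupported M ≤ cyclicWindowCount opposed L := by
  by_cases hb : ∃ e, (1, e) ∈ L
  · obtain ⟨e, he⟩ := hb
    obtain ⟨G, hG, hrot⟩ := exists_isGapForm hL he hw
    have hτ := hG.transvection_apply
    refine ⟨_, hτ.isCyclicallyReduced, hτ.isConj, ?_⟩
    rw [cyclicWindowCount_eq_of_isRotated hrot]
    exact cyclicWindowCount_unsupported_shiftGaps_le hG.isReducedGaps hG.lastSign_eq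
  · have hzero : ∀ x ∈ L, x.1 = 0 := fun x hx => by
      by_contra h0
      exact hb ⟨x.2, by rwa [← Fin.eq_one_of_ne_zero x.1 h0]⟩
    obtain ⟨n, hn⟩ := exists_mk_eq_zpow hzero
    have hfix : τ (FreeGroup.mk L) = FreeGroup.mk L := by
      rw [hn, map_zpow]
      exact congrArg (· ^ n) (transvection_of_rev 1)
    refine ⟨L, hL, hfix ▸ isConj_mulAut_apply τ hw, ?_⟩
    rw [cyclicWindowCount_eq_zero]
    · exact Nat.zero_le _
    · intro x _ y hy z _
      simp [unsupported, hzero y hy]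

theorem HasDefectLE.tau (h : HasDefectLE w m) : HasDefectLE (τ w) m := by
  obtain ⟨L, hL, hw, hopp⟩ := h.exists_cyclicWindowCount_opposed_le
  obtain ⟨M, hM, hτw, hle⟩ := exists_cyclicWindowCount_unsupported_le_opposed hL hw
  exact (hasDefectLE_cyclicWindowCount_unsupported hM hτw).mono (hle.trans hopp)

theorem isConj_sigma_gb_zpow {n : ℤ} (h : IsConj w (gb ^ n)) : IsConj (σ w) (gb ^ n) := by
  have hfix : σ gb = gb := transvection_of_rev 0
  simpa [hfix] using isConj_mulAut_apply σ h

theorem HasDefectLE.sigma (h : HasDefectLE w m) : HasDefectLE (σ w) (m - 1) := by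
  rcases h with ⟨n, hn⟩ | ⟨e, G, hG, hd⟩
  · exact .inl ⟨n, isConj_sigma_gb_zpow hn⟩
  · exact .inr ⟨e, shiftGaps e G, hG.transvection_apply,
      (defect_shiftGaps_le e G).trans (Nat.sub_le_sub_right hd 1)⟩

theorem HasDefectLE.sigma_pow (h : HasDefectLE w m) (l : ℕ) :
    HasDefectLE ((σ ^ l) w) (m - l) := by
  induction l with
  | zero => exact h
  | succ l ih =>
    rw [pow_succ', MulAut.mul_apply, ← Nat.sub_sub]
    exact ih.sigma

theorem HasDefectLE.tau_pow (h : HasDefectLE w m) (l : ℕ) : HasDefectLE ((τ ^ l) w) m := by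
  induction l with
  | zero => exact h
  | succ l ih =>
    rw [pow_succ', MulAut.mul_apply]
    exact ih.tau

theorem HasDefectLE.chainC1 (h : HasDefectLE w m) (c : List (ℕ × ℕ)) :
    HasDefectLE (chainC1 c w) (m - sigmaCount c) := by
  induction c with
  | nil => exact h
  | cons p c ih =>
    have hp := (ih.sigma_pow p.1).tau_pow p.2
    have hcount : m - sigmaCount (p :: c) = m - sigmaCount c - p.1 := by
      simp [sigmaCount, Nat.sub_sub, add_comm]
    rw [hcount]
    exact hp

theorem IsGapForm.cyclen_sigma {e : Bool} {G : List (ℤ × Bool)} (h : IsGapForm 0 e G w)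
    (hd : defect e G = 0) : cyclen (σ w) = cyclen w + growth e G := by
  have hσ : cyclen (σ w) = _ := h.transvection_apply.cyclen_eq
  rw [hσ, h.cyclen_eq, length_gapWord_shiftGaps 0 hd]

theorem IsGapForm.exists_sigma_pow {e : Bool} {G : List (ℤ × Bool)} (h : IsGapForm 0 e G w)
    (hd : defect e G = 0) (l : ℕ) :
    ∃ H, IsGapForm 0 e H ((σ ^ l) w) ∧ defect e H = 0 ∧ growth e H = growth e G := by
  induction l with
  | zero => exact ⟨G, h, hd, rfl⟩
  | succ l ih =>
    obtain ⟨H, hH, hdH, hgrowth⟩ := ih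
    refine ⟨shiftGaps e H, ?_, ?_, (growth_shiftGaps e H).trans hgrowth⟩
    · rw [pow_succ', MulAut.mul_apply]
      exact hH.transvection_apply
    · exact Nat.le_zero.1 ((defect_shiftGaps_le e H).trans (by omega))

theorem HasDefectLE.exists_cyclen_sigma_pow_succ (h : HasDefectLE w 0) :
    ∃ k, ∀ l, cyclen ((σ ^ (l + 1)) w) = cyclen ((σ ^ l) w) + k := by
  simp only [pow_succ', MulAut.mul_apply]
  rcases h with ⟨n, hn⟩ | ⟨e, G, hG, hd⟩
  · have hpow (l : ℕ) : IsConj ((σ ^ l) w) (gb ^ n) := by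
      induction l with
      | zero => exact hn
      | succ l ih =>
        rw [pow_succ', MulAut.mul_apply]
        exact isConj_sigma_gb_zpow ih
    exact ⟨0, fun l => cyclen_eq_of_isConj ((isConj_sigma_gb_zpow (hpow l)).trans (hpow l).symm)⟩
  · refine ⟨growth e G, fun l => ?_⟩
    obtain ⟨H, hH, hdH, hgrowth⟩ := hG.exists_sigma_pow (Nat.le_zero.1 hd) l
    rw [← hgrowth, hH.cyclen_sigma hdH]

theorem exists_cyclen_sigma_pow_succ_chainC1 {c : List (ℕ × ℕ)} (h : cyclen u ≤ sigmaCount c) :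
    ∃ k, ∀ l, cyclen ((σ ^ (l + 1)) (chainC1 c u)) = cyclen ((σ ^ l) (chainC1 c u)) + k :=
  (((hasDefectLE_cyclen u).chainC1 c).mono (by omega)).exists_cyclen_sigma_pow_succ

end Chains

/-- Lemma 4.3.3. -/
theorem stmt6 (u : F) (c : List (ℕ × ℕ)) (hne : c ≠ [])
    (hσ : cyclen u + 1 ≤ sigmaCount c) :
    (cyclen (σ (chainC1 c u)) = cyclen (chainC1 c u) →
      ∀ i : ℕ, cyclen ((σ ^ (i + 1)) (chainC1 c u)) = cyclen ((σ ^ i) (chainC1 c u))) ∧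
    ((∃ j : ℕ, cyclen ((σ ^ (j + 1)) (chainC1 c u)) = cyclen ((σ ^ j) (chainC1 c u))) →
      cyclen (σ (chainC1 c u)) = cyclen (chainC1 c u)) := by
  obtain ⟨k, hk⟩ := exists_cyclen_sigma_pow_succ_chainC1 (u := u) (c := c) (by omega)
  have hk₀ : cyclen (σ (chainC1 c u)) = cyclen (chainC1 c u) + k := hk 0
  refine ⟨fun h i => ?_, fun ⟨j, hj⟩ => ?_⟩
  · rw [hk i, show k = 0 by omega, add_zero]
  · rw [hk j] at hj
    omega
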